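/- arXiv:2602.06934 — 2 statements merged into one kernel-verified Lean document; each statement's English description precedes it below -/
import Mathlib

section
/- A transactions-based protocol over an interactive set of transactions is grassroots: if S is a local-states function and R an interactive set of transactions over S, then the transactions-based protocol over R and S is both oblivious and interactive. -/
/-- An (atomic) transaction: a pair of distinct configurations over a nonempty
finite set `Q` of participant agents. -/
structure Txn (𝒜 𝒮 : Type*) where
  Q : Finset 𝒜
  hQ : Q.Nonempty
  c : {a // a ∈ Q} → 𝒮
  c' : {a // a ∈ Q} → 𝒮
  hne : c ≠ c'

/-- The `P`-closure of a pair `cc = (c, c')` of configurations over participants `Q`: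
the set of pairs `(d, d')` of configurations over `P` (with values in `S`) such that
`d` and `d'` agree with `c` and `c'` respectively on `Q`, and `d p = d' p` for every
`p ∈ P \ Q`. (Empty unless `Q ⊆ P`.) -/
def upClosure {𝒜 𝒮 : Type*} (S : Set 𝒮) (Q : Finset 𝒜)
    (cc : ({a // a ∈ Q} → 𝒮) × ({a // a ∈ Q} → 𝒮)) (P : Finset 𝒜) :
    Set (({a // a ∈ P} → 𝒮) × ({a // a ∈ P} → 𝒮)) :=
  {dd | ∃ h : Q ⊆ P,
    (∀ p, dd.1 p ∈ S ∧ dd.2 p ∈ S) ∧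
    (∀ q : {a // a ∈ Q}, dd.1 ⟨q.1, h q.2⟩ = cc.1 q ∧ dd.2 ⟨q.1, h q.2⟩ = cc.2 q) ∧
    (∀ p : {a // a ∈ P}, p.1 ∉ Q → dd.1 p = dd.2 p)}

/-- `R(P)`: the transactions in `R` whose participants `Q` satisfy `Q ⊆ P` and which
are over `S(Q')` for some `Q' ⊆ P`. -/
def RofP {𝒜 𝒮 : Type*} (SF : Finset 𝒜 → Set 𝒮) (R : Set (Txn 𝒜 𝒮)) (P : Finset 𝒜) :
    Set (Txn 𝒜 𝒮) :=
  {t | t ∈ R ∧ t.Q ⊆ P ∧ ∃ Q' : Finset 𝒜, Q' ⊆ P ∧ t.Q ⊆ Q' ∧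
    (∀ q, t.c q ∈ SF Q') ∧ (∀ q, t.c' q ∈ SF Q')}

/-- The transition set `T(P) = R(P)↑P` of the transactions-based protocol over `R`
and the local-states function `SF`. -/
def TofP {𝒜 𝒮 : Type*} (SF : Finset 𝒜 → Set 𝒮) (R : Set (Txn 𝒜 𝒮)) (P : Finset 𝒜) :
    Set (({a // a ∈ P} → 𝒮) × ({a // a ∈ P} → 𝒮)) :=
  ⋃ t ∈ RofP SF R P, upClosure (SF P) t.Q (t.c, t.c') P

/-- `C(P)`: the configurations over `P` and `S(P)`. -/
def CofP {𝒜 𝒮 : Type*} (SF : Finset 𝒜 → Set 𝒮) (P : Finset 𝒜) :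
    Set ({a // a ∈ P} → 𝒮) :=
  {c | ∀ p, c p ∈ SF P}

/-- The projection `c/P` of a configuration over `P'` to `P ⊆ P'`. -/
def restr {𝒜 𝒮 : Type*} {P P' : Finset 𝒜} (h : P ⊆ P') (c : {a // a ∈ P'} → 𝒮) :
    {a // a ∈ P} → 𝒮 :=
  fun p => c ⟨p.1, h p.2⟩

/-- A set `R` of transactions over the local-states function `SF` is interactive if
for all nonempty finite `P ⊊ P'` and every configuration `c ∈ C(P')` with
`c/P ∈ C(P)`, there is a computation `c →* c'` using transitions of `R(P')↑P'` with
`c'/P ∉ C(P)`. -/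
def RInteractive {𝒜 𝒮 : Type*} (SF : Finset 𝒜 → Set 𝒮) (R : Set (Txn 𝒜 𝒮)) : Prop :=
  ∀ P P' : Finset 𝒜, P.Nonempty → ∀ h : P ⊂ P', ∀ c ∈ CofP SF P',
    restr h.subset c ∈ CofP SF P →
    ∃ c', Relation.ReflTransGen (fun a b => (a, b) ∈ TofP SF R P') c c' ∧
      restr h.subset c' ∉ CofP SF P

/-!
Closures compose: if a transition over `P` is in the closure of a transaction `t` over `Q`, then its
closure to `P' ⊇ P` lies in the closure of `t` to `P'`, because an agent of `P' \ Q` is either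
outside `P`, hence fixed by the second closure, or in `P \ Q`, hence fixed by the first. Since
moreover `R(P)` grows with `P`, the protocol is oblivious. Its interactivity is that of `R`, as the
transitions available to `P'` are exactly `R(P')↑P'`.
-/

/-- The transition sets `T(P)` of a protocol, one for each finite set `P` of agents. The rest of the
transition system `F(P)` is left out: its configurations are `CofP SF P` for a separate
local-states function `SF`, and obliviousness and interactivity do not mention the initial one. -/
abbrev TransitionFamily (𝒜 𝒮 : Type*) :=
  ∀ P : Finset 𝒜, Set (({a // a ∈ P} → 𝒮) × ({a // a ∈ P} → 𝒮))

section Protocol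

variable {𝒜 𝒮 : Type*} (SF : Finset 𝒜 → Set 𝒮) (T : TransitionFamily 𝒜 𝒮)

/-- A protocol is oblivious if a group of agents may proceed inside a larger group as it would on
its own: `T(P)↑P' ⊆ T(P')`. -/
def IsOblivious : Prop :=
  ∀ P P' : Finset 𝒜, P.Nonempty → P ⊂ P' →
    (⋃ dd ∈ T P, upClosure (SF P') P dd P') ⊆ T P'

/-- A protocol is interactive if a group `P` inside a larger group `P'` can always be brought to
local states that `P` could not have on its own. -/
def IsInteractive : Prop :=
  ∀ P P' : Finset 𝒜, P.Nonempty → ∀ h : P ⊂ P', ∀ c ∈ CofP SF P',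
    restr h.subset c ∈ CofP SF P →
    ∃ c', Relation.ReflTransGen (fun a b => (a, b) ∈ T P') c c' ∧
      restr h.subset c' ∉ CofP SF P

/-- A protocol is grassroots if it is oblivious and interactive. -/
structure IsGrassroots : Prop where
  oblivious : IsOblivious SF T
  interactive : IsInteractive SF T

end Protocol

section Transactions

variable {𝒜 𝒮 : Type*}

theorem upClosure_subset_upClosure_of_mem {S S' : Set 𝒮} {Q P P' : Finset 𝒜}
    {cc : ({a // a ∈ Q} → 𝒮) × ({a // a ∈ Q} → 𝒮)}
    {dd : ({a // a ∈ P} → 𝒮) × ({a // a ∈ P} → 𝒮)} (hdd : dd ∈ upClosure S Q cc P) :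
    upClosure S' P dd P' ⊆ upClosure S' Q cc P' := by
  obtain ⟨hQP, -, dd_eq_cc, dd_fixed⟩ := hdd
  rintro ee ⟨hPP', ee_mem, ee_eq_dd, ee_fixed⟩
  refine ⟨hQP.trans hPP', ee_mem, fun q => ?_, fun p hpQ => ?_⟩
  · obtain ⟨before_ee, after_ee⟩ := ee_eq_dd ⟨q, hQP q.2⟩
    obtain ⟨before_dd, after_dd⟩ := dd_eq_cc q
    exact ⟨before_ee.trans before_dd, after_ee.trans after_dd⟩
  · by_cases hpP : p.1 ∈ P
    · obtain ⟨before_ee, after_ee⟩ := ee_eq_dd ⟨p, hpP⟩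
      calc
        ee.1 p = dd.1 ⟨p, hpP⟩ := before_ee
        _ = dd.2 ⟨p, hpP⟩ := dd_fixed ⟨p, hpP⟩ hpQ
        _ = ee.2 p := after_ee.symm
    · exact ee_fixed p hpP

theorem RofP_mono (SF : Finset 𝒜 → Set 𝒮) (R : Set (Txn 𝒜 𝒮)) : Monotone (RofP SF R) := by
  rintro P P' hPP' t ⟨htR, htP, Q', hQ'P, t_over_Q'⟩
  exact ⟨htR, htP.trans hPP', Q', hQ'P.trans hPP', t_over_Q'⟩

theorem iUnion_upClosure_TofP_subset (SF : Finset 𝒜 → Set 𝒮) (R : Set (Txn 𝒜 𝒮))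
    {P P' : Finset 𝒜} (hPP' : P ⊆ P') :
    (⋃ dd ∈ TofP SF R P, upClosure (SF P') P dd P') ⊆ TofP SF R P' := by
  refine Set.iUnion₂_subset fun dd hdd => ?_
  obtain ⟨t, htP, hdd_t⟩ := Set.mem_iUnion₂.mp hdd
  exact (upClosure_subset_upClosure_of_mem hdd_t).trans
    (Set.subset_biUnion_of_mem (u := fun t => upClosure (SF P') t.Q (t.c, t.c') P')
      (RofP_mono SF R hPP' htP))

theorem isOblivious_TofP (SF : Finset 𝒜 → Set 𝒮) (R : Set (Txn 𝒜 𝒮)) :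
    IsOblivious SF (TofP SF R) :=
  fun _ _ _ hPP' => iUnion_upClosure_TofP_subset SF R hPP'.subset

theorem transactionsBased_interactive_grassroots_general {SF : Finset 𝒜 → Set 𝒮}
    {R : Set (Txn 𝒜 𝒮)} (hint : RInteractive SF R) : IsGrassroots SF (TofP SF R) where
  oblivious := isOblivious_TofP SF R
  interactive := hint

end Transactions

/-- A transactions-based protocol over an interactive set of transactions is
grassroots: if `SF` is a local-states function and `R` an interactive set of
transactions over `SF`, then the transactions-based protocol over `R` and `SF`
(with transition sets `T(P) = R(P)↑P`) is both oblivious and interactive. -/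
theorem transactionsBased_interactive_grassroots
    {𝒜 𝒮 : Type*} (s0 : 𝒮) (SF : Finset 𝒜 → Set 𝒮)
    (hs0 : ∀ P : Finset 𝒜, P.Nonempty → s0 ∈ SF P)
    (hmono : ∀ P P' : Finset 𝒜, P.Nonempty → P ⊆ P' → SF P ⊆ SF P')
    (R : Set (Txn 𝒜 𝒮))
    (hR : ∀ t ∈ R, ∃ Q' : Finset 𝒜, t.Q ⊆ Q' ∧
      (∀ q, t.c q ∈ SF Q') ∧ (∀ q, t.c' q ∈ SF Q'))
    (hint : RInteractive SF R) :
    (∀ P P' : Finset 𝒜, P.Nonempty → P ⊂ P' →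
      (⋃ dd ∈ TofP SF R P, upClosure (SF P') P dd P') ⊆ TofP SF R P') ∧
    (∀ P P' : Finset 𝒜, P.Nonempty → ∀ h : P ⊂ P', ∀ c ∈ CofP SF P',
      restr h.subset c ∈ CofP SF P →
      ∃ c', Relation.ReflTransGen (fun a b => (a, b) ∈ TofP SF R P') c c' ∧
        restr h.subset c' ∉ CofP SF P) :=
  have h := transactionsBased_interactive_grassroots_general hint
  ⟨h.oblivious, h.interactive⟩
end

section
/- Implementations preserve the grassroots property: let F be a protocol over local-states function S on state type 𝒮 (the specification) and F' a protocol over local-states function S' on state type 𝒮' (the implementation), and let f : 𝒮' → 𝒮 be an agentwise implementation mapping that is surjective on locals, locality-reflecting, a backward simulation, and a tight forward simulation. If F' is grassroots (oblivious and interactive), then F is grassroots. -/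
/-- A protocol with transition sets `T(P)` (over local-states function `SF`) is
oblivious if for all nonempty finite `P ⊊ P'`, `T(P)↑P' ⊆ T(P')`. -/
def Oblivious {𝒜 𝒮 : Type*} (SF : Finset 𝒜 → Set 𝒮)
    (T : (P : Finset 𝒜) → Set (({a // a ∈ P} → 𝒮) × ({a // a ∈ P} → 𝒮))) : Prop :=
  ∀ P P' : Finset 𝒜, P.Nonempty → P ⊂ P' →
    (⋃ dd ∈ T P, upClosure (SF P') P dd P') ⊆ T P'

/-- A protocol with transition sets `T(P)` (over local-states function `SF`) is
interactive if for all nonempty finite `P ⊊ P'` and every `c ∈ C(P')` with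
`c/P ∈ C(P)`, there is a computation `c →* c'` of `F(P')` with `c'/P ∉ C(P)`. -/
def Interactive {𝒜 𝒮 : Type*} (SF : Finset 𝒜 → Set 𝒮)
    (T : (P : Finset 𝒜) → Set (({a // a ∈ P} → 𝒮) × ({a // a ∈ P} → 𝒮))) : Prop :=
  ∀ P P' : Finset 𝒜, P.Nonempty → ∀ h : P ⊂ P', ∀ c ∈ CofP SF P',
    restr h.subset c ∈ CofP SF P →
    ∃ c', Relation.ReflTransGen (fun a b => (a, b) ∈ T P') c c' ∧
      restr h.subset c' ∉ CofP SF P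

/-- The transitions of a protocol over `SF` are pairs of distinct configurations
over `P` (values in `S(P)`). -/
def ProtocolWF {𝒜 𝒮 : Type*} (SF : Finset 𝒜 → Set 𝒮)
    (T : (P : Finset 𝒜) → Set (({a // a ∈ P} → 𝒮) × ({a // a ∈ P} → 𝒮))) : Prop :=
  ∀ P : Finset 𝒜, P.Nonempty → ∀ dd ∈ T P,
    dd.1 ≠ dd.2 ∧ (∀ p, dd.1 p ∈ SF P) ∧ (∀ p, dd.2 p ∈ SF P)

/-- `f` is surjective on locals: for every nonempty finite `P`, `f` maps `S'(P)`
onto `S(P)`. -/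
def SurjOnLocals {𝒜 𝒮 𝒮' : Type*} (f : 𝒮' → 𝒮)
    (SF' : Finset 𝒜 → Set 𝒮') (SF : Finset 𝒜 → Set 𝒮) : Prop :=
  ∀ P : Finset 𝒜, P.Nonempty → f '' SF' P = SF P

/-- `f` is locality-reflecting: for all nonempty finite `P ⊊ P'` and every
`s ∈ S'(P')`, `f s ∈ S(P)` implies `s ∈ S'(P)`. -/
def LocalityReflecting {𝒜 𝒮 𝒮' : Type*} (f : 𝒮' → 𝒮)
    (SF' : Finset 𝒜 → Set 𝒮') (SF : Finset 𝒜 → Set 𝒮) : Prop :=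
  ∀ P P' : Finset 𝒜, P.Nonempty → P ⊂ P' →
    ∀ s ∈ SF' P', f s ∈ SF P → s ∈ SF' P

/-- `f` is a backward simulation: for every nonempty finite `P` and every
`(a, b) ∈ T'(P)`, either `π_P a = π_P b` or `(π_P a, π_P b) ∈ T(P)`. -/
def BackwardSim {𝒜 𝒮 𝒮' : Type*} (f : 𝒮' → 𝒮)
    (T' : (P : Finset 𝒜) → Set (({a // a ∈ P} → 𝒮') × ({a // a ∈ P} → 𝒮')))
    (T : (P : Finset 𝒜) → Set (({a // a ∈ P} → 𝒮) × ({a // a ∈ P} → 𝒮))) : Prop :=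
  ∀ P : Finset 𝒜, P.Nonempty → ∀ ab ∈ T' P,
    (f ∘ ab.1 = f ∘ ab.2) ∨ (f ∘ ab.1, f ∘ ab.2) ∈ T P

/-- `f` is a tight forward simulation: for every nonempty finite `P`, every
`(c, d) ∈ T(P)`, and every configuration `a ∈ C'(P)` with `π_P a = c`, there is a
computation of `F'(P)` from `a` to some `b` with `π_P b = d` such that every
configuration along the computation maps under `π_P` to `c` or to `d`. -/
def TightForwardSim {𝒜 𝒮 𝒮' : Type*} (f : 𝒮' → 𝒮)
    (SF' : Finset 𝒜 → Set 𝒮')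
    (T' : (P : Finset 𝒜) → Set (({a // a ∈ P} → 𝒮') × ({a // a ∈ P} → 𝒮')))
    (T : (P : Finset 𝒜) → Set (({a // a ∈ P} → 𝒮) × ({a // a ∈ P} → 𝒮))) : Prop :=
  ∀ P : Finset 𝒜, P.Nonempty → ∀ cd ∈ T P, ∀ a : {x // x ∈ P} → 𝒮',
    (∀ p, a p ∈ SF' P) → f ∘ a = cd.1 →
    ∃ l : List ({x // x ∈ P} → 𝒮'), l ≠ [] ∧
      l.Chain' (fun x y => (x, y) ∈ T' P) ∧
      l.head? = some a ∧
      (∃ b, l.getLast? = some b ∧ f ∘ b = cd.2) ∧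
      (∀ x ∈ l, f ∘ x = cd.1 ∨ f ∘ x = cd.2)

/-!
*Obliviousness.* Along a tight computation refining `(c, d) ∈ T(P)` every configuration maps to `c`
or to `d`, so a single step crosses from the fibre of `c` to the fibre of `d`. Choose the starting
point of the computation as the restriction of a lift of the larger configuration; since `F'` is
oblivious, the crossing step extends to `P'` with the lift frozen outside `P`. Its image is the
prescribed element of the closure of `(c, d)`, and as `c ≠ d` the backward simulation cannot
collapse it, so it is a transition of `F`.

*Interactivity.* Lift the configuration, run an escaping computation of `F'` and project it. By
locality reflection, a configuration outside `C'(P)` cannot project into `C(P)`.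
-/

theorem exists_rel_leaving_of_isChain {α : Type*} {R : α → α → Prop} {l : List α} {p : α → Prop}
    {a b : α} (hl : l.IsChain R) (hhead : l.head? = some a) (ha : p a) (hb : b ∈ l) (hpb : ¬ p b) :
    ∃ x ∈ l, ∃ y ∈ l, R x y ∧ p x ∧ ¬ p y := by
  by_contra! hstay
  have hcarries : l.IsChain (fun x y => p x → p y) :=
    hl.imp_of_mem_imp fun x y hx hy hxy => hstay x hx y hy hxy
  refine hpb (hcarries.induction p l (fun _ _ h => h) (fun hne => ?_) b hb)
  rw [List.head?_eq_some_head hne, Option.some.injEq] at hhead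
  exact hhead ▸ ha

section Overwrite

variable {𝒜 𝒮 𝒮' : Type*} {P P' : Finset 𝒜}

/-- For `P ⊆ P'`, the configuration over `P'` that is `z` on `P` and `a` on `P' \ P`. The elements
of the closure of `(c, c')` are the pairs `(overwrite h c a, overwrite h c' a)`. -/
noncomputable def overwrite (h : P ⊆ P') (z : {a // a ∈ P} → 𝒮) (a : {a // a ∈ P'} → 𝒮) :
    {a // a ∈ P'} → 𝒮 :=
  Function.extend (Subtype.map id h) z a

theorem restr_overwrite (h : P ⊆ P') (z : {a // a ∈ P} → 𝒮) (a : {a // a ∈ P'} → 𝒮) :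
    restr h (overwrite h z a) = z :=
  Function.extend_comp (Subtype.map_injective h Function.injective_id) z a

theorem overwrite_apply_of_notMem (h : P ⊆ P') (z : {a // a ∈ P} → 𝒮) (a : {a // a ∈ P'} → 𝒮)
    {p : {a // a ∈ P'}} (hp : p.1 ∉ P) : overwrite h z a p = a p :=
  Function.extend_apply' _ _ _ fun ⟨q, hq⟩ => hp (hq ▸ q.2)

theorem comp_overwrite (f : 𝒮' → 𝒮) (h : P ⊆ P') (z : {a // a ∈ P} → 𝒮')
    (a : {a // a ∈ P'} → 𝒮') : f ∘ overwrite h z a = overwrite h (f ∘ z) (f ∘ a) :=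
  funext fun _ => Function.apply_extend f _ _ _

theorem eq_overwrite {h : P ⊆ P'} {z : {a // a ∈ P} → 𝒮} {a d : {a // a ∈ P'} → 𝒮}
    (hon : restr h d = z) (hoff : ∀ p : {a // a ∈ P'}, p.1 ∉ P → d p = a p) :
    d = overwrite h z a := by
  funext p
  by_cases hp : p.1 ∈ P
  · exact congrFun (hon.trans (restr_overwrite h z a).symm) ⟨p.1, hp⟩
  · rw [overwrite_apply_of_notMem h z a hp, hoff p hp]

theorem overwrite_mem_CofP {SF : Finset 𝒜 → Set 𝒮} (h : P ⊆ P') (hmono : SF P ⊆ SF P')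
    {z : {a // a ∈ P} → 𝒮} {a : {a // a ∈ P'} → 𝒮} (hz : z ∈ CofP SF P) (ha : a ∈ CofP SF P') :
    overwrite h z a ∈ CofP SF P' := by
  intro p
  by_cases hp : p.1 ∈ P
  · have hval : overwrite h z a p = z ⟨p.1, hp⟩ := congrFun (restr_overwrite h z a) ⟨p.1, hp⟩
    exact hval ▸ hmono (hz ⟨p.1, hp⟩)
  · exact overwrite_apply_of_notMem h z a hp ▸ ha p

theorem overwrite_mem_upClosure {S : Set 𝒮} (h : P ⊆ P') {x y : {a // a ∈ P} → 𝒮}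
    {a : {a // a ∈ P'} → 𝒮} (hx : ∀ p, overwrite h x a p ∈ S) (hy : ∀ p, overwrite h y a p ∈ S) :
    (overwrite h x a, overwrite h y a) ∈ upClosure S P (x, y) P' := by
  refine ⟨h, fun p => ⟨hx p, hy p⟩, fun q => ?_, fun p hp => ?_⟩
  · exact ⟨congrFun (restr_overwrite h x a) q, congrFun (restr_overwrite h y a) q⟩
  · exact (overwrite_apply_of_notMem h x a hp).trans (overwrite_apply_of_notMem h y a hp).symm

theorem eq_overwrite_of_mem_upClosure {S : Set 𝒮} (h : P ⊆ P') {c c' : {a // a ∈ P} → 𝒮}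
    {d d' : {a // a ∈ P'} → 𝒮} (hd : (d, d') ∈ upClosure S P (c, c') P') :
    d = overwrite h c d ∧ d' = overwrite h c' d := by
  obtain ⟨_, -, hon, hoff⟩ := hd
  exact ⟨eq_overwrite (funext fun q => (hon q).1) fun _ _ => rfl,
    eq_overwrite (funext fun q => (hon q).2) fun p hp => (hoff p hp).symm⟩

end Overwrite

section Simulation

variable {𝒜 𝒮 𝒮' : Type*} {SF : Finset 𝒜 → Set 𝒮} {SF' : Finset 𝒜 → Set 𝒮'}
  {T : (P : Finset 𝒜) → Set (({a // a ∈ P} → 𝒮) × ({a // a ∈ P} → 𝒮))}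
  {T' : (P : Finset 𝒜) → Set (({a // a ∈ P} → 𝒮') × ({a // a ∈ P} → 𝒮'))}
  {f : 𝒮' → 𝒮} {P P' : Finset 𝒜}

theorem SurjOnLocals.exists_comp_eq (hsurj : SurjOnLocals f SF' SF) (hP : P.Nonempty)
    {d : {a // a ∈ P} → 𝒮} (hd : d ∈ CofP SF P) : ∃ a ∈ CofP SF' P, f ∘ a = d := by
  have hpre : ∀ p, ∃ s ∈ SF' P, f s = d p := fun p => (hsurj P hP).ge (hd p)
  choose a ha hfa using hpre
  exact ⟨a, ha, funext hfa⟩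

theorem LocalityReflecting.restr_mem_CofP (hloc : LocalityReflecting f SF' SF) (hP : P.Nonempty)
    (h : P ⊂ P') {a : {a // a ∈ P'} → 𝒮'} (ha : a ∈ CofP SF' P')
    (hfa : restr h.subset (f ∘ a) ∈ CofP SF P) : restr h.subset a ∈ CofP SF' P :=
  fun p => hloc P P' hP h _ (ha _) (hfa p)

theorem ProtocolWF.mem_CofP_of_reflTransGen (hT : ProtocolWF SF T) (hP : P.Nonempty)
    {a b : {a // a ∈ P} → 𝒮} (ha : a ∈ CofP SF P)
    (hab : Relation.ReflTransGen (fun x y => (x, y) ∈ T P) a b) : b ∈ CofP SF P := by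
  cases hab with
  | refl => exact ha
  | tail _ hstep => exact (hT P hP _ hstep).2.2

theorem BackwardSim.reflTransGen_comp (hback : BackwardSim f T' T) (hP : P.Nonempty)
    {a b : {a // a ∈ P} → 𝒮'} (hab : Relation.ReflTransGen (fun x y => (x, y) ∈ T' P) a b) :
    Relation.ReflTransGen (fun x y => (x, y) ∈ T P) (f ∘ a) (f ∘ b) := by
  refine hab.lift' (f ∘ ·) fun x y hxy => ?_
  obtain (hstutter : f ∘ x = f ∘ y) | hstep := hback P hP (x, y) hxy
  · rw [Function.onFun, hstutter]
  · exact .single hstep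

theorem TightForwardSim.exists_transition (htight : TightForwardSim f SF' T' T) (hP : P.Nonempty)
    {c d : {a // a ∈ P} → 𝒮} (hcd : (c, d) ∈ T P) (hne : c ≠ d) {a : {a // a ∈ P} → 𝒮'}
    (ha : a ∈ CofP SF' P) (hfa : f ∘ a = c) :
    ∃ x y, (x, y) ∈ T' P ∧ f ∘ x = c ∧ f ∘ y = d := by
  obtain ⟨l, -, hchain, hhead, ⟨b, hlast, hfb⟩, hfibre⟩ := htight P hP (c, d) hcd a ha hfa
  obtain ⟨x, -, y, hy, hxy, hfx, hfy⟩ :=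
    exists_rel_leaving_of_isChain (p := fun z => f ∘ z = c) hchain hhead hfa
      (List.mem_of_getLast? hlast) fun hfb' => hne (hfb'.symm.trans hfb)
  exact ⟨x, y, hxy, hfx, (hfibre y hy).resolve_left hfy⟩

theorem Oblivious.overwrite_mem (hobl : Oblivious SF T) (hT : ProtocolWF SF T) (hP : P.Nonempty)
    (h : P ⊂ P') (hmono : SF P ⊆ SF P') {x y : {a // a ∈ P} → 𝒮} (hxy : (x, y) ∈ T P)
    {a : {a // a ∈ P'} → 𝒮} (ha : a ∈ CofP SF P') :
    (overwrite h.subset x a, overwrite h.subset y a) ∈ T P' := by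
  obtain ⟨-, hx, hy⟩ := hT P hP (x, y) hxy
  exact hobl P P' hP h <| Set.mem_biUnion hxy <| overwrite_mem_upClosure h.subset
    (overwrite_mem_CofP h.subset hmono hx ha) (overwrite_mem_CofP h.subset hmono hy ha)

theorem Oblivious.of_implementation
    (hmono' : ∀ P P' : Finset 𝒜, P.Nonempty → P ⊆ P' → SF' P ⊆ SF' P')
    (hT : ProtocolWF SF T) (hT' : ProtocolWF SF' T') (hsurj : SurjOnLocals f SF' SF)
    (hloc : LocalityReflecting f SF' SF) (hback : BackwardSim f T' T)
    (htight : TightForwardSim f SF' T' T) (hobl : Oblivious SF' T') : Oblivious SF T := by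
  intro P P' hP h
  refine Set.iUnion₂_subset fun ⟨c, c'⟩ hcc' ⟨d, d'⟩ hdd' => ?_
  obtain ⟨hne, hc, -⟩ := hT P hP (c, c') hcc'
  have ⟨_, hdS, _⟩ := hdd'
  obtain ⟨hd, hd'⟩ := eq_overwrite_of_mem_upClosure h.subset hdd'
  have hdc : restr h.subset d = c := by rw [hd, restr_overwrite]
  have hdc' : restr h.subset d' = c' := by rw [hd', restr_overwrite]
  have hP' : P'.Nonempty := hP.mono h.subset
  obtain ⟨a, ha, rfl⟩ := hsurj.exists_comp_eq hP' fun p => (hdS p).1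
  obtain ⟨x, y, hxy, hfx, hfy⟩ := htight.exists_transition hP hcc' hne
    (hloc.restr_mem_CofP hP h ha (hdc ▸ hc)) hdc
  have hstep : (overwrite h.subset x a, overwrite h.subset y a) ∈ T' P' :=
    hobl.overwrite_mem hT' hP h (hmono' P P' hP h.subset) hxy ha
  have hfstep := hback P' hP' _ hstep
  simp only [comp_overwrite, hfx, hfy, ← hd, ← hd'] at hfstep
  exact hfstep.resolve_left fun heq => hne (hdc ▸ hdc' ▸ congrArg (restr h.subset) heq)

theorem Interactive.of_implementation (hT' : ProtocolWF SF' T') (hsurj : SurjOnLocals f SF' SF)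
    (hloc : LocalityReflecting f SF' SF) (hback : BackwardSim f T' T)
    (hinter : Interactive SF' T') : Interactive SF T := by
  intro P P' hP h c hc hcP
  have hP' : P'.Nonempty := hP.mono h.subset
  obtain ⟨a, ha, rfl⟩ := hsurj.exists_comp_eq hP' hc
  obtain ⟨b, hab, hbP⟩ := hinter P P' hP h a ha (hloc.restr_mem_CofP hP h ha hcP)
  have hb : b ∈ CofP SF' P' := hT'.mem_CofP_of_reflTransGen hP' ha hab
  exact ⟨f ∘ b, hback.reflTransGen_comp hP' hab,
    fun hfbP => hbP (hloc.restr_mem_CofP hP h hb hfbP)⟩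

end Simulation

/-- Implementations preserve the grassroots property: let `F` be a protocol over
local-states function `SF` on `𝒮` (the specification) and `F'` a protocol over
`SF'` on `𝒮'` (the implementation), and let `f : 𝒮' → 𝒮` be an agentwise
implementation mapping (`f s0' = s0`) that is surjective on locals,
locality-reflecting, a backward simulation, and a tight forward simulation.
If `F'` is grassroots (oblivious and interactive), then `F` is grassroots. -/
theorem implementation_preserves_grassroots
    {𝒜 𝒮 𝒮' : Type*} (s0 : 𝒮) (s0' : 𝒮')
    (SF : Finset 𝒜 → Set 𝒮) (SF' : Finset 𝒜 → Set 𝒮')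
    (hs0 : ∀ P : Finset 𝒜, P.Nonempty → s0 ∈ SF P)
    (hmono : ∀ P P' : Finset 𝒜, P.Nonempty → P ⊆ P' → SF P ⊆ SF P')
    (hs0' : ∀ P : Finset 𝒜, P.Nonempty → s0' ∈ SF' P)
    (hmono' : ∀ P P' : Finset 𝒜, P.Nonempty → P ⊆ P' → SF' P ⊆ SF' P')
    (T : (P : Finset 𝒜) → Set (({a // a ∈ P} → 𝒮) × ({a // a ∈ P} → 𝒮)))
    (T' : (P : Finset 𝒜) → Set (({a // a ∈ P} → 𝒮') × ({a // a ∈ P} → 𝒮')))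
    (hT : ProtocolWF SF T) (hT' : ProtocolWF SF' T')
    (f : 𝒮' → 𝒮) (hf0 : f s0' = s0)
    (hsurj : SurjOnLocals f SF' SF)
    (hloc : LocalityReflecting f SF' SF)
    (hback : BackwardSim f T' T)
    (htight : TightForwardSim f SF' T' T)
    (hgrass' : Oblivious SF' T' ∧ Interactive SF' T') :
    Oblivious SF T ∧ Interactive SF T := by
  exact ⟨hgrass'.1.of_implementation hmono' hT hT' hsurj hloc hback htight,
    hgrass'.2.of_implementation hT' hsurj hloc hback⟩
end
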